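/- For any completely regular Hausdorff (Tychonoff) topological space X, the following are equivalent: (i) Player II has a winning strategy in the ω-Rothberger game G_1(Ω_X, Ω_X); (ii) for every f ∈ C_p(X), Player II has a winning strategy in the strong countable fan tightness game G_1(ℬ_{C_p(X),f}, ℬ_{C_p(X),f}); (iii) for every f ∈ C_p(X), Player II has a winning strategy in the strong countable dense fan tightness game G_1(𝒟_{C_p(X)}, ℬ_{C_p(X),f}). -/

import Mathlib

open TopologicalSpace Cardinal

/-- Player II has a winning (perfect-information) strategy in the selection game
`G_fin(𝒜, ℬ)`: during round `n`, Player I plays `A n ∈ 𝒜` and II responds with a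
finite subset of `A n` depending on `⟨A 0, …, A n⟩`; II wins iff the union of
its selections lies in `ℬ`. -/
def WinStratFin {X : Type*} (𝒜 ℬ : Set (Set X)) : Prop :=
  ∃ σ : (n : ℕ) → (Fin (n + 1) → Set X) → Set X,
    (∀ (n : ℕ) (s : Fin (n + 1) → Set X), (∀ i, s i ∈ 𝒜) →
      (σ n s).Finite ∧ σ n s ⊆ s (Fin.last n)) ∧
    ∀ A : ℕ → Set X, (∀ n, A n ∈ 𝒜) →
      (⋃ n : ℕ, σ n (fun i => A i)) ∈ ℬ

/-- Player II has a winning Markov strategy in `G_fin(𝒜, ℬ)`: its finite selection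
from `A n` depends only on `A n` and the round number `n`. -/
def WinMarkovFin {X : Type*} (𝒜 ℬ : Set (Set X)) : Prop :=
  ∃ σ : Set X → ℕ → Set X,
    (∀ A ∈ 𝒜, ∀ n : ℕ, (σ A n).Finite ∧ σ A n ⊆ A) ∧
    ∀ A : ℕ → Set X, (∀ n, A n ∈ 𝒜) → (⋃ n : ℕ, σ (A n) n) ∈ ℬ

/-- Player II has a winning (perfect-information) strategy in the strong selection
game `G_1(𝒜, ℬ)`: during round `n`, Player I plays `A n ∈ 𝒜` and II responds with a
single element of `A n` depending on `⟨A 0, …, A n⟩`; II wins iff the set of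
its selections lies in `ℬ`. -/
def WinStratOne {X : Type*} (𝒜 ℬ : Set (Set X)) : Prop :=
  ∃ σ : (n : ℕ) → (Fin (n + 1) → Set X) → X,
    (∀ (n : ℕ) (s : Fin (n + 1) → Set X), (∀ i, s i ∈ 𝒜) →
      σ n s ∈ s (Fin.last n)) ∧
    ∀ A : ℕ → Set X, (∀ n, A n ∈ 𝒜) →
      {x | ∃ n : ℕ, x = σ n (fun i => A i)} ∈ ℬ

/-- Player II has a winning Markov strategy in `G_1(𝒜, ℬ)`. -/
def WinMarkovOne {X : Type*} (𝒜 ℬ : Set (Set X)) : Prop :=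
  ∃ σ : Set X → ℕ → X,
    (∀ A ∈ 𝒜, ∀ n : ℕ, σ A n ∈ A) ∧
    ∀ A : ℕ → Set X, (∀ n, A n ∈ 𝒜) → {x | ∃ n : ℕ, x = σ (A n) n} ∈ ℬ

/-- `𝒟_X`: the collection of dense subsets of `X`. -/
def denseFamily (X : Type*) [TopologicalSpace X] : Set (Set X) := {D | Dense D}

/-- `ℬ_{X,x}`: the collection of subsets of `X` having `x` in their closure. -/
def blades (X : Type*) [TopologicalSpace X] (x : X) : Set (Set X) :=
  {A | x ∈ closure A}

/-- An ω-cover of `X`: an open cover such that every finite subset of `X` is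
contained in some member. -/
def IsOmegaCover {X : Type*} [TopologicalSpace X] (𝒰 : Set (Set X)) : Prop :=
  (∀ U ∈ 𝒰, IsOpen U) ∧ (⋃₀ 𝒰 = Set.univ) ∧
    ∀ F : Set X, F.Finite → ∃ U ∈ 𝒰, F ⊆ U

/-- `Ω_X`: the collection of ω-covers of `X`. -/
def omegaCovers (X : Type*) [TopologicalSpace X] : Set (Set (Set X)) :=
  {𝒰 | IsOmegaCover 𝒰}

/-- `𝒪_X`: the collection of open covers of `X`. -/
def openCovers (X : Type*) [TopologicalSpace X] : Set (Set (Set X)) :=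
  {𝒰 | (∀ U ∈ 𝒰, IsOpen U) ∧ ⋃₀ 𝒰 = Set.univ}

/-- `C_p(X)`: continuous real-valued functions on `X` with the topology of
pointwise convergence (subspace of the product `ℝ^X`). -/
abbrev Cp (X : Type*) [TopologicalSpace X] : Type _ := {f : X → ℝ // Continuous f}

/-- Countable fan tightness of `Y` at `y`. -/
def CFTat (Y : Type*) [TopologicalSpace Y] (y : Y) : Prop :=
  ∀ A : ℕ → Set Y, (∀ n, y ∈ closure (A n)) →
    ∃ B : ℕ → Set Y, (∀ n, (B n).Finite ∧ B n ⊆ A n) ∧ y ∈ closure (⋃ n, B n)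

/-- Countable dense fan tightness of `Y` at `y`. -/
def CDFTat (Y : Type*) [TopologicalSpace Y] (y : Y) : Prop :=
  ∀ A : ℕ → Set Y, (∀ n, Dense (A n)) →
    ∃ B : ℕ → Set Y, (∀ n, (B n).Finite ∧ B n ⊆ A n) ∧ y ∈ closure (⋃ n, B n)

/-- Selective separability of `X`. -/
def SelSep (X : Type*) [TopologicalSpace X] : Prop :=
  ∀ D : ℕ → Set X, (∀ n, Dense (D n)) →
    ∃ E : ℕ → Set X, (∀ n, (E n).Finite ∧ E n ⊆ D n) ∧ Dense (⋃ n, E n)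

/-- The Ω-Menger selection principle `S_fin(Ω_X, Ω_X)`. -/
def OmegaMenger (X : Type*) [TopologicalSpace X] : Prop :=
  ∀ 𝒰 : ℕ → Set (Set X), (∀ n, 𝒰 n ∈ omegaCovers X) →
    ∃ ℱ : ℕ → Set (Set X), (∀ n, (ℱ n).Finite ∧ ℱ n ⊆ 𝒰 n) ∧
      (⋃ n, ℱ n) ∈ omegaCovers X

/-- The one-point Lindelöfication topology on `Option α`: sets not containing
`none` (the point `∞`) are open, and a set containing `∞` is open iff its
complement is countable. -/
def lindTop (α : Type*) : TopologicalSpace (Option α) where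
  IsOpen S := none ∈ S → Sᶜ.Countable
  isOpen_univ := by simp
  isOpen_inter := by
    intro s t hs ht hmem
    rw [Set.compl_inter]
    exact (hs hmem.1).union (ht hmem.2)
  isOpen_sUnion := by
    intro S hS hmem
    obtain ⟨s, hsS, hns⟩ := hmem
    exact ((hS s hsS hns).mono
      (Set.compl_subset_compl.mpr (Set.subset_sUnion_of_mem hsS)))

theorem transfer_aux {Y Z : Type*} [Nonempty Y] {𝒜 ℬ : Set (Set Z)} {𝒜' ℬ' : Set (Set Y)}
    (T : ℕ → Set Y → Set Z) (R : ℕ → Y → Z → Prop)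
    (hT : ∀ n, ∀ A ∈ 𝒜', T n A ∈ 𝒜)
    (hR : ∀ n, ∀ A ∈ 𝒜', ∀ z ∈ T n A, ∃ y ∈ A, R n y z)
    (hwin : ∀ (y : ℕ → Y) (z : ℕ → Z), (∀ n, R n (y n) (z n)) →
      (∀ N, ∃ B ∈ ℬ, ∀ b ∈ B, ∃ n ≥ N, b = z n) → {x | ∃ n, x = y n} ∈ ℬ')
    (h : WinStratOne 𝒜 ℬ) : WinStratOne 𝒜' ℬ' := by
  classical
  obtain ⟨σ, hσ, hσw⟩ := h
  let τ : (n : ℕ) → (Fin (n + 1) → Set Y) → Z := fun n s =>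
    σ n.unpair.2 (fun i => T (Nat.pair n.unpair.1 i)
      (s ⟨min (Nat.pair n.unpair.1 i) n, by omega⟩))
  have key : ∀ (n : ℕ) (s : Fin (n + 1) → Set Y), (∀ i, s i ∈ 𝒜') →
      ∃ y ∈ s (Fin.last n), R n y (τ n s) := by
    intro n s hs
    apply hR n _ (hs _)
    have := hσ n.unpair.2 (fun i => T (Nat.pair n.unpair.1 i)
      (s ⟨min (Nat.pair n.unpair.1 i) n, by omega⟩)) (fun i => hT _ _ (hs _))
    simpa [τ, Fin.last] using this
  refine ⟨fun n s => if hs : ∀ i, s i ∈ 𝒜' then (key n s hs).choose else Classical.arbitrary Y,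
    ?_, ?_⟩
  · intro n s hs
    simp only [dif_pos hs]
    exact (key n s hs).choose_spec.1
  · intro A hA
    apply hwin _ (fun n => τ n (fun i => A i))
    · intro n
      have hs : ∀ i : Fin (n + 1), A i ∈ 𝒜' := fun i => hA i
      simp only [dif_pos hs]
      exact (key n _ hs).choose_spec.2
    · intro N
      refine ⟨_, hσw (fun j => T (Nat.pair N j) (A (Nat.pair N j))) (fun j => hT _ _ (hA _)), ?_⟩
      rintro b ⟨j, rfl⟩
      refine ⟨Nat.pair N j, Nat.left_le_pair N j, ?_⟩
      have hle : ∀ i : Fin (j + 1), Nat.pair N i ≤ Nat.pair N j := fun i => by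
        rcases (Nat.lt_succ_iff.1 i.2).lt_or_eq with h | h
        · exact (Nat.pair_lt_pair_right N h).le
        · rw [h]
      have aux : ∀ k l n : ℕ, k = N → l = j → n = Nat.pair N j →
          σ j (fun i => T (Nat.pair N i) (A (Nat.pair N i))) =
          σ l (fun i => T (Nat.pair k i) (A (min (Nat.pair k i) n))) := by
        rintro k l n rfl rfl rfl
        congr 1
        funext i
        rw [min_eq_left (hle i)]
      exact aux _ _ _ (by simp) (by simp) rfl

theorem mem_closure_Cp {X : Type*} [TopologicalSpace X] (A : Set (Cp X)) (f : Cp X) :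
    f ∈ closure A ↔ ∀ F : Set X, F.Finite → ∀ ε > 0, ∃ g ∈ A, ∀ x ∈ F, |g.1 x - f.1 x| < ε := by
  constructor
  · intro h F hF ε hε
    rw [mem_closure_iff] at h
    have ho : IsOpen (⋂ x ∈ F, {g : Cp X | |g.1 x - f.1 x| < ε}) := by
      refine hF.isOpen_biInter fun x _ => ?_
      have hc : Continuous fun g : Cp X => g.1 x := (continuous_apply x).comp continuous_subtype_val
      exact isOpen_lt (hc.sub continuous_const).abs continuous_const
    obtain ⟨g, hg, hgA⟩ := h _ ho (by simp [hε])
    refine ⟨g, hgA, fun x hx => ?_⟩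
    simpa using Set.mem_iInter₂.1 hg x hx
  · intro h
    rw [mem_closure_iff]
    intro o ho hfo
    obtain ⟨V, hV, rfl⟩ := isOpen_induced_iff.1 ho
    obtain ⟨I, u, hu, hIu⟩ := isOpen_pi_iff.1 hV f.1 hfo
    have : ∀ᶠ ε in nhdsWithin (0:ℝ) (Set.Ioi 0), ∀ i ∈ I, Metric.ball (f.1 i) ε ⊆ u i := by
      rw [Filter.eventually_all_finset]
      intro i hi
      obtain ⟨δ, hδ, hb⟩ := Metric.isOpen_iff.1 (hu i hi).1 _ (hu i hi).2
      filter_upwards [Ioo_mem_nhdsGT hδ] with ε hε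
      exact (Metric.ball_subset_ball hε.2.le).trans hb
    obtain ⟨ε, h1, h2⟩ := (this.and self_mem_nhdsWithin).exists
    obtain ⟨g, hgA, hg⟩ := h I I.finite_toSet ε h2
    refine ⟨g, hIu fun i hi => h1 i hi ?_, hgA⟩
    rw [Metric.mem_ball, Real.dist_eq]
    exact hg i hi

theorem dense_aux {X : Type*} [TopologicalSpace X] [T35Space X] (𝒰 : Set (Set X))
    (h : IsOmegaCover 𝒰) : Dense {f : Cp X | ∃ U ∈ 𝒰, ∀ x ∉ U, f.1 x = 1} := by
  classical
  intro g
  rw [mem_closure_Cp]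
  intro F hF ε hε
  obtain ⟨U, hU, hFU⟩ := h.2.2 F hF
  have hc : ∀ x ∈ F, ∃ k : X → ℝ, Continuous k ∧ k x = 0 ∧ ∀ y ∉ U, k y = 1 := by
    intro x hx
    obtain ⟨k, hk, h0, h1⟩ := CompletelyRegularSpace.completely_regular x Uᶜ
      (h.1 U hU).isClosed_compl (by simpa using hFU hx)
    refine ⟨fun y => k y, by fun_prop, by simp [h0], fun y hy => ?_⟩
    simp [h1 hy]
  choose! k hk h0 h1 using hc
  have hp : Continuous fun y => ∏ x ∈ hF.toFinset, k x y :=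
    continuous_finset_prod _ fun x hx => hk x (by simpa using hx)
  have hg := g.2
  refine ⟨⟨fun y => g.1 y * (1 - ∏ x ∈ hF.toFinset, k x y) + ∏ x ∈ hF.toFinset, k x y,
    by fun_prop⟩, ⟨U, hU, fun y hy => ?_⟩, fun y hy => ?_⟩
  · have : ∏ x ∈ hF.toFinset, k x y = 1 :=
      Finset.prod_eq_one fun x hx => h1 x (by simpa using hx) y hy
    simp [this]
  · have : ∏ x ∈ hF.toFinset, k x y = 0 :=
      Finset.prod_eq_zero (by simpa using hy) (h0 y hy)
    simp [this, hε]

/-- For Tychonoff `X`, TFAE: (i) II wins the ω-Rothberger game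
`G_1(Ω_X, Ω_X)`; (ii) II wins the strong countable fan tightness game at every
`f ∈ C_p(X)`; (iii) II wins the strong countable dense fan tightness game at
every `f ∈ C_p(X)`. -/
theorem statement17 (X : Type*) [TopologicalSpace X] [T35Space X] :
    List.TFAE [WinStratOne (omegaCovers X) (omegaCovers X),
      ∀ f : Cp X, WinStratOne (blades (Cp X) f) (blades (Cp X) f),
      ∀ f : Cp X, WinStratOne (denseFamily (Cp X)) (blades (Cp X) f)] := by
  tfae_have 1 → 2 := by
    intro h f
    haveI : Nonempty (Cp X) := ⟨f⟩
    refine transfer_aux (fun n A => (fun g : Cp X => {x | |g.1 x - f.1 x| < 1 / ((n : ℝ) + 1)}) '' A)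
      (fun n g U => {x | |g.1 x - f.1 x| < 1 / ((n : ℝ) + 1)} = U) ?_ ?_ ?_ h
    · intro n A hA
      have hA' := (mem_closure_Cp A f).1 hA
      have hfin : ∀ F : Set X, F.Finite → ∃ U ∈
          (fun g : Cp X => {x | |g.1 x - f.1 x| < 1 / ((n : ℝ) + 1)}) '' A, F ⊆ U := by
        intro F hF
        obtain ⟨g, hg, hgF⟩ := hA' F hF (1 / ((n : ℝ) + 1)) (by positivity)
        exact ⟨_, ⟨g, hg, rfl⟩, hgF⟩
      refine ⟨?_, ?_, hfin⟩
      · rintro _ ⟨g, hg, rfl⟩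
        exact isOpen_lt (g.2.sub f.2).abs continuous_const
      · refine Set.eq_univ_of_forall fun x => ?_
        obtain ⟨U, hU, hx⟩ := hfin {x} (Set.finite_singleton x)
        exact ⟨U, hU, hx rfl⟩
    · rintro n A hA _ ⟨g, hg, rfl⟩
      exact ⟨g, hg, rfl⟩
    · intro y z hyz hz
      refine (mem_closure_Cp _ f).2 fun F hF ε hε => ?_
      obtain ⟨N, hN⟩ := exists_nat_one_div_lt hε
      obtain ⟨B, hB, hBz⟩ := hz N
      obtain ⟨U, hU, hFU⟩ := hB.2.2 F hF
      obtain ⟨n, hn, rfl⟩ := hBz U hU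
      refine ⟨y n, ⟨n, rfl⟩, fun x hx => ?_⟩
      have := hFU hx
      rw [← hyz n] at this
      exact (lt_of_lt_of_le this (Nat.one_div_le_one_div hn)).trans hN
  tfae_have 2 → 3 := by
    intro h f
    obtain ⟨σ, h1, h2⟩ := h f
    have hd : ∀ A ∈ denseFamily (Cp X), A ∈ blades (Cp X) f := fun A hA => hA f
    exact ⟨σ, fun n s hs => h1 n s fun i => hd _ (hs i), fun A hA => h2 A fun n => hd _ (hA n)⟩
  tfae_have 3 → 1 := by
    intro h
    have h0 := h ⟨fun _ => 0, continuous_const⟩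
    refine transfer_aux (fun _ 𝒰 => {f : Cp X | ∃ U ∈ 𝒰, ∀ x ∉ U, f.1 x = 1})
      (fun _ U f => IsOpen U ∧ ∀ x ∉ U, f.1 x = 1) ?_ ?_ ?_ h0
    · intro n 𝒰 hU
      exact dense_aux 𝒰 hU
    · rintro n 𝒰 hU f ⟨U, hUU, hf⟩
      exact ⟨U, hUU, hU.1 U hUU, hf⟩
    · intro y z hyz hz
      have hfin : ∀ F : Set X, F.Finite → ∃ U ∈ {x | ∃ n, x = y n}, F ⊆ U := by
        intro F hF
        obtain ⟨B, hB, hBz⟩ := hz 0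
        obtain ⟨g, hg, hgF⟩ := (mem_closure_Cp _ _).1 hB F hF 1 one_pos
        obtain ⟨n, -, rfl⟩ := hBz g hg
        refine ⟨y n, ⟨n, rfl⟩, fun x hx => ?_⟩
        by_contra hxn
        have h3 := hgF x hx
        rw [(hyz n).2 x hxn] at h3
        norm_num at h3
      refine ⟨?_, ?_, hfin⟩
      · rintro _ ⟨n, rfl⟩
        exact (hyz n).1
      · refine Set.eq_univ_of_forall fun x => ?_
        obtain ⟨U, hU, hx⟩ := hfin {x} (Set.finite_singleton x)
        exact ⟨U, hU, hx rfl⟩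
  tfae_finish
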